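/- For every t ≥ 1, the maximum size s_max(t) of a Sidon set in F_2^t satisfies: s_max(t) ≤ 2^((t+1)/2) if t is odd, and s_max(t) ≤ ⌊√(2^(t+1)) + 0.5⌋ if t is even. -/

import Mathlib

/-- A subset `M` of `𝔽₂ᵗ` is Sidon if `m₁+m₂ ≠ m₃+m₄` for pairwise distinct elements. -/
def IsSidon {t : ℕ} (M : Finset (Fin t → ZMod 2)) : Prop :=
  ∀ m₁ ∈ M, ∀ m₂ ∈ M, ∀ m₃ ∈ M, ∀ m₄ ∈ M,
    (m₁ ≠ m₂ ∧ m₁ ≠ m₃ ∧ m₁ ≠ m₄ ∧ m₂ ≠ m₃ ∧ m₂ ≠ m₄ ∧ m₃ ≠ m₄) →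
    m₁ + m₂ ≠ m₃ + m₄

/-- `M` is sum-free if `m₁+m₂ ≠ m₃` for all `m₁,m₂,m₃ ∈ M`. -/
def IsSumFree {t : ℕ} (M : Finset (Fin t → ZMod 2)) : Prop :=
  ∀ m₁ ∈ M, ∀ m₂ ∈ M, ∀ m₃ ∈ M, m₁ + m₂ ≠ m₃

/-- A maximal Sidon set. -/
def IsMaximalSidon {t : ℕ} (M : Finset (Fin t → ZMod 2)) : Prop :=
  IsSidon M ∧ ∀ S : Finset (Fin t → ZMod 2), IsSidon S → M ⊆ S → S = M

/-- Maximum size of a Sidon set in `𝔽₂ᵗ`. -/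
noncomputable def sMax (t : ℕ) : ℕ :=
  sSup {n : ℕ | ∃ M : Finset (Fin t → ZMod 2), IsSidon M ∧ M.card = n}

/-- 2-sums of `M`. -/
def twoSums {t : ℕ} (M : Finset (Fin t → ZMod 2)) : Finset (Fin t → ZMod 2) :=
  (M ×ˢ M).image fun p => p.1 + p.2

/-- 2-star-sums of `M` (sums of two distinct elements). -/
def twoStarSums {t : ℕ} (M : Finset (Fin t → ZMod 2)) : Finset (Fin t → ZMod 2) :=
  ((M ×ˢ M).filter fun p => p.1 ≠ p.2).image fun p => p.1 + p.2

/-- 3-sums of `M`. -/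
def threeSums {t : ℕ} (M : Finset (Fin t → ZMod 2)) : Finset (Fin t → ZMod 2) :=
  ((M ×ˢ M) ×ˢ M).image fun p => p.1.1 + p.1.2 + p.2

/-- 3-star-sums of `M` (sums of three pairwise distinct elements). -/
def threeStarSums {t : ℕ} (M : Finset (Fin t → ZMod 2)) : Finset (Fin t → ZMod 2) :=
  (((M ×ˢ M) ×ˢ M).filter fun p => p.1.1 ≠ p.1.2 ∧ p.1.1 ≠ p.2 ∧ p.1.2 ≠ p.2).image
    fun p => p.1.1 + p.1.2 + p.2

/-- 4-sums of `M`. -/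
def fourSums {t : ℕ} (M : Finset (Fin t → ZMod 2)) : Finset (Fin t → ZMod 2) :=
  (((M ×ˢ M) ×ˢ M) ×ˢ M).image fun p => p.1.1.1 + p.1.1.2 + p.1.2 + p.2

/-!
The sums of the two-element subsets of a Sidon set `M` are pairwise distinct, and in characteristic
two they are nonzero. Hence `(#M).choose 2 < 2 ^ t`, that is, `#M * (#M - 1) < 2 ^ (t + 1)`. Both
sides are integers, so the `1 / 4` from completing the square is absorbed:
`(#M - 1 / 2) ^ 2 ≤ 2 ^ (t + 1)`. For odd `t` the right-hand side is a perfect square, so taking the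
floor removes the `1 / 2`.
-/

lemma pairwise_ne_of_add_eq_add_of_pair_ne {G : Type*} [AddCommMagma G] [IsCancelAdd G]
    [DecidableEq G] {a b c d : G} (hab : a ≠ b) (hcd : c ≠ d) (hsum : a + b = c + d)
    (hpair : ({a, b} : Finset G) ≠ {c, d}) :
    a ≠ b ∧ a ≠ c ∧ a ≠ d ∧ b ≠ c ∧ b ≠ d ∧ c ≠ d := by
  refine ⟨hab, ?_, ?_, ?_, ?_, hcd⟩ <;> rintro rfl
  · exact hpair (by rw [add_left_cancel hsum])
  · rw [add_comm c a] at hsum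
    exact hpair (by rw [add_left_cancel hsum, Finset.pair_comm])
  · rw [add_comm a b] at hsum
    exact hpair (by rw [add_left_cancel hsum, Finset.pair_comm])
  · exact hpair (by rw [add_right_cancel hsum])

lemma IsSidon.injOn_sum_powersetCard_two {t : ℕ} {M : Finset (Fin t → ZMod 2)} (hM : IsSidon M) :
    Set.InjOn (fun s ↦ ∑ x ∈ s, x) (M.powersetCard 2 : Set (Finset (Fin t → ZMod 2))) := by
  intro s hs s' hs' hsum
  obtain ⟨hsM, hs_card⟩ := Finset.mem_powersetCard.1 hs
  obtain ⟨hsM', hs_card'⟩ := Finset.mem_powersetCard.1 hs'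
  obtain ⟨a, b, hab, rfl⟩ := Finset.card_eq_two.1 hs_card
  obtain ⟨c, d, hcd, rfl⟩ := Finset.card_eq_two.1 hs_card'
  simp only [Finset.insert_subset_iff, Finset.singleton_subset_iff] at hsM hsM'
  simp only [Finset.sum_pair hab, Finset.sum_pair hcd] at hsum
  by_contra hpair
  exact hM a hsM.1 b hsM.2 c hsM'.1 d hsM'.2
    (pairwise_ne_of_add_eq_add_of_pair_ne hab hcd hsum hpair) hsum

lemma choose_card_two_lt_card_of_injOn_sum {V : Type*} [AddCommGroup V] [Module (ZMod 2) V]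
    [Fintype V] {A : Finset V}
    (hA : Set.InjOn (fun s ↦ ∑ x ∈ s, x) (A.powersetCard 2 : Set (Finset V))) :
    A.card.choose 2 < Fintype.card V := by
  classical
  have zero_notMem : (0 : V) ∉ (A.powersetCard 2).image fun s ↦ ∑ x ∈ s, x := by
    simp only [Finset.mem_image, Finset.mem_powersetCard, not_exists, not_and]
    rintro s ⟨-, hs_card⟩ hsum
    obtain ⟨a, b, hab, rfl⟩ := Finset.card_eq_two.1 hs_card
    rw [Finset.sum_pair hab] at hsum
    exact hab (by rw [eq_neg_of_add_eq_zero_left hsum, ZModModule.neg_eq_self])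
  calc
    A.card.choose 2 = ((A.powersetCard 2).image fun s ↦ ∑ x ∈ s, x).card := by
      rw [Finset.card_image_of_injOn hA, Finset.card_powersetCard]
    _ < Fintype.card V := Finset.card_lt_univ_of_notMem zero_notMem

lemma IsSidon.choose_card_two_lt_two_pow {t : ℕ} {M : Finset (Fin t → ZMod 2)} (hM : IsSidon M) :
    M.card.choose 2 < 2 ^ t := by
  simpa using choose_card_two_lt_card_of_injOn_sum hM.injOn_sum_powersetCard_two

lemma le_floor_sqrt_add_half_of_choose_two_lt {k n : ℕ} (h : k.choose 2 < n) :
    k ≤ ⌊√(2 * n) + 0.5⌋₊ := by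
  have choose_add_one_le : (k * (k - 1) / 2 + 1 : ℝ) ≤ n := by
    rw [← Nat.cast_choose_two]
    exact_mod_cast h
  have sub_half_le_sqrt : (k - 0.5 : ℝ) ≤ √(2 * n) := Real.le_sqrt_of_sq_le (by linarith)
  exact Nat.le_floor (by linarith)

lemma sMax_le_floor_sqrt_add_half (t : ℕ) : sMax t ≤ ⌊√(2 ^ (t + 1)) + 0.5⌋₊ := by
  refine csSup_le' ?_
  rintro _ ⟨M, hM, rfl⟩
  have h := le_floor_sqrt_add_half_of_choose_two_lt hM.choose_card_two_lt_two_pow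
  rwa [Nat.cast_pow, Nat.cast_ofNat, ← pow_succ'] at h

lemma floor_sqrt_sq_add_half (n : ℕ) : ⌊√((n : ℝ) ^ 2) + 0.5⌋₊ = n := by
  rw [Real.sqrt_sq n.cast_nonneg, Nat.floor_eq_iff (by positivity)]
  constructor <;> linarith

theorem sidon_trivial_upper_bound (t : ℕ) (ht : 1 ≤ t) :
    (Odd t → sMax t ≤ 2 ^ ((t + 1) / 2)) ∧
    (Even t → sMax t ≤ ⌊Real.sqrt ((2 : ℝ) ^ (t + 1)) + 0.5⌋₊) := by
  refine ⟨fun hodd ↦ ?_, fun _ ↦ sMax_le_floor_sqrt_add_half t⟩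
  have pow_eq_sq : (2 : ℝ) ^ (t + 1) = ((2 ^ ((t + 1) / 2) : ℕ) : ℝ) ^ 2 := by
    rw [Nat.cast_pow, Nat.cast_ofNat, ← pow_mul, Nat.div_mul_cancel hodd.add_one.two_dvd]
  calc
    sMax t ≤ ⌊√(2 ^ (t + 1)) + 0.5⌋₊ := sMax_le_floor_sqrt_add_half t
    _ = 2 ^ ((t + 1) / 2) := by rw [pow_eq_sq, floor_sqrt_sq_add_half]
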